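/- Convex hull computation from the running example: in ℝ³ with coordinates (c, k, p), let S₁ = {(c, k, p) | c = k + 1} (the current negative condition c - k = 1) and S₂ = {(c, k, p) | p + k ≤ 0 ∧ p = 2 ∧ c = 0} (the generalized counterexample condition 0 ≥ p + k ∧ 0 = p - 2 ∧ 0 = c). Then the convex hull (over ℝ) of S₁ ∪ S₂ equals {(c, k, p) | k + 1 ≤ c}. -/

import Mathlib

theorem convexHull_running_example :
    convexHull ℝ
      ({q : ℝ × ℝ × ℝ | q.1 = q.2.1 + 1} ∪
       {q : ℝ × ℝ × ℝ | q.2.2 + q.2.1 ≤ 0 ∧ q.2.2 = 2 ∧ q.1 = 0}) =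
      {q : ℝ × ℝ × ℝ | q.2.1 + 1 ≤ q.1} := by
  apply Set.Subset.antisymm
  · apply convexHull_min
    · rintro ⟨c, k, p⟩ (h | ⟨h₁, h₂, h₃⟩)
      · exact h.ge
      · simp only [Set.mem_ofPred_eq] at *
        linarith
    · rintro ⟨c, k, p⟩ h ⟨c', k', p'⟩ h' a b ha hb hab
      simp only [Set.mem_ofPred_eq, Prod.smul_mk, Prod.mk_add_mk, smul_eq_mul] at *
      nlinarith [mul_le_mul_of_nonneg_left h ha, mul_le_mul_of_nonneg_left h' hb]
  · rintro ⟨c, k, p⟩ h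
    simp only [Set.mem_ofPred_eq] at h
    obtain ⟨d, hd, rfl⟩ : ∃ d : ℝ, 0 ≤ d ∧ c = k + 1 + d :=
      ⟨c - k - 1, by linarith, by ring⟩
    have hd₁ : 0 < d + 1 := by linarith
    -- The point divides the segment from `x` on the plane to `s` in the second set as `d : 1`.
    let x : ℝ × ℝ × ℝ :=
      ((d + 1) * (k + 1 + d), (d + 1) * k + d * (d + 2), (d + 1) * p - 2 * d)
    let s : ℝ × ℝ × ℝ := (0, -2 - d, 2)
    have hx : x ∈ {q : ℝ × ℝ × ℝ | q.1 = q.2.1 + 1} := by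
      simp only [x, Set.mem_ofPred_eq]; ring
    have hs : s ∈ {q : ℝ × ℝ × ℝ | q.2.2 + q.2.1 ≤ 0 ∧ q.2.2 = 2 ∧ q.1 = 0} :=
      ⟨by simp only [s]; linarith, rfl, rfl⟩
    refine segment_subset_convexHull (Set.mem_union_left _ hx) (Set.mem_union_right _ hs)
      ⟨1 / (d + 1), d / (d + 1), by positivity, by positivity, by field_simp; ring, ?_⟩
    simp only [x, s, Prod.smul_mk, Prod.mk_add_mk, smul_eq_mul, Prod.mk.injEq]
    refine ⟨?_, ?_, ?_⟩ <;> field_simp <;> ring
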